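/- Let D^k(H)^-_0 := { X ∈ D^k(H)^- : the spectral radius of X_i is strictly less than 1 for every i }. Then d_P is a metric on D^k(H)^-_0 (in particular d_P(A,B) < ∞ for all A, B in this set), and it is complete: every d_P-Cauchy sequence in D^k(H)^-_0 converges in d_P to an element of D^k(H)^-_0. -/

import Mathlib

open ContinuousLinearMap

noncomputable section

/-- `ℓ²(ℕ^k; H)`. -/
abbrev L2 (k : ℕ) (H : Type*) [NormedAddCommGroup H] : Type _ :=
  lp (fun _ : Fin k → ℕ => H) 2

variable {k : ℕ} {H : Type*} [NormedAddCommGroup H] [InnerProductSpace ℂ H] [CompleteSpace H]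

/-- The Loewner (operator) order: `S ≤ T` iff `T - S` is a positive operator. -/
def opLE {E : Type*} [NormedAddCommGroup E] [InnerProductSpace ℂ E] [CompleteSpace E]
    (S T : E →L[ℂ] E) : Prop := (T - S).IsPositive

/-- The defect operator `Δ_X(I) = (id - Φ_{X_1}) ∘ ⋯ ∘ (id - Φ_{X_k})(I)`,
where `Φ_{X_i}(Y) = X_i Y X_i*`. -/
def defect (X : Fin k → (H →L[ℂ] H)) : H →L[ℂ] H :=
  ((List.ofFn fun i => fun Y : H →L[ℂ] H => Y - X i * Y * adjoint (X i)).foldr (· ∘ ·) id) 1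

/-- Membership in the regular polydisk `D^k(H)`: pairwise commuting operators of norm `< 1`
with positive invertible defect operator. -/
def memPolydisk (X : Fin k → (H →L[ℂ] H)) : Prop :=
  (∀ i j, Commute (X i) (X j)) ∧ (∀ i, ‖X i‖ < 1) ∧
    (defect X).IsPositive ∧ IsUnit (defect X)

/-- Membership in the closed regular polydisk `D^k(H)⁻`: pairwise commuting contractions `X`
with `rX ∈ D^k(H)` for all `r ∈ (0,1)`. -/
def memClosedPolydisk (X : Fin k → (H →L[ℂ] H)) : Prop :=
  (∀ i j, Commute (X i) (X j)) ∧ (∀ i, ‖X i‖ ≤ 1) ∧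
    ∀ r ∈ Set.Ioo (0 : ℝ) 1, memPolydisk (fun i => ((r : ℂ) • X i))

/-- `P` is the pluriharmonic Poisson kernel `𝒫(R, rX)` on `ℓ²(ℕ^k; H)`: it is characterized by
`⟨𝒫(R,rX)(δ_β h), δ_α ℓ⟩ = r^{Σ|α_i - β_i|} ⟨(∏ X_i^{(β_i-α_i)⁺})(∏ (X_i*)^{(α_i-β_i)⁺}) h, ℓ⟩`. -/
def IsPoissonKernel (X : Fin k → (H →L[ℂ] H)) (r : ℝ)
    (P : L2 k H →L[ℂ] L2 k H) : Prop :=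
  ∀ (α β : Fin k → ℕ) (h ℓ : H),
    inner (𝕜 := ℂ) (P (lp.single 2 β h)) (lp.single 2 α ℓ) =
      ((r ^ (∑ i, ((α i - β i) + (β i - α i))) : ℝ) : ℂ) *
        inner (𝕜 := ℂ)
          (((List.ofFn fun i => X i ^ (β i - α i)).prod *
            (List.ofFn fun i => (adjoint (X i)) ^ (α i - β i)).prod) h) ℓ

/-- The two-sided Harnack-type domination `c⁻² 𝒫(R,rB) ≤ 𝒫(R,rA) ≤ c² 𝒫(R,rB)` for all
`r ∈ [0,1)`, expressed in terms of the Poisson kernel families. -/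
def PoissonSandwich (PA PB : ℝ → (L2 k H →L[ℂ] L2 k H)) (c : ℝ) : Prop :=
  ∀ r ∈ Set.Ico (0 : ℝ) 1,
    opLE (((c : ℂ) ^ 2)⁻¹ • PB r) (PA r) ∧ opLE (PA r) (((c : ℂ) ^ 2) • PB r)

/-- Poisson equivalence of two points, expressed via their Poisson kernel families. -/
def PoissonEquiv (PA PB : ℝ → (L2 k H →L[ℂ] L2 k H)) : Prop :=
  ∃ c : ℝ, 1 ≤ c ∧ PoissonSandwich PA PB c

/-- The Poisson distance `δ_P`, expressed via the Poisson kernel families. -/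
def deltaP (PA PB : ℝ → (L2 k H →L[ℂ] L2 k H)) : ℝ :=
  Real.log (sInf {c : ℝ | 1 ≤ c ∧ PoissonSandwich PA PB c})


open scoped ENNReal

/-- Membership in `D^k(H)⁻₀`: elements of the closed regular polydisk all of whose entries
have spectral radius strictly less than `1`. -/
def memD0 (X : Fin k → (H →L[ℂ] H)) : Prop :=
  memClosedPolydisk X ∧ ∀ i, spectralRadius ℂ (X i) < 1

/-- `d_P(A,B) = sup_{r ∈ [0,1)} ‖𝒫(R,rA) - 𝒫(R,rB)‖`, computed in `ℝ≥0∞` from the Poisson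
kernel families. -/
def dPfam (PA PB : ℝ → (L2 k H →L[ℂ] L2 k H)) : ℝ≥0∞ :=
  ⨆ r ∈ Set.Ico (0 : ℝ) 1, (‖PA r - PB r‖₊ : ℝ≥0∞)

/-! The entries of `𝒫(R, rX)` are dominated by the Toeplitz matrix `∏ i, ‖Xᵢ ^ |αᵢ - βᵢ|‖`. When
every spectral radius is less than `1` these norms are summable, and Schur's test bounds `𝒫(R, rX)`
uniformly in `r`; hence `d_P` is finite. As `r Xᵢ` is an entry of the kernel, `d_P` separates
points.

A `d_P`-Cauchy sequence has kernels that converge uniformly in `r`, so its points converge in norm.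
The closed polydisk is norm closed, because positivity of the defect of every `rX` already forces
its invertibility. Finally the limit kernels are bounded uniformly in `r`; their first columns
contain `(r Xᵢ*) ^ n x`, so the sums `∑ ‖(Xᵢ*) ^ n x‖ ^ 2` are bounded by a multiple of `‖x‖ ^ 2`.
This makes some power of `Xᵢ` a strict contraction, and puts the limit point in `D^k(H)⁻₀`. -/

open Filter Topology

section SpectralRadius

theorem summable_norm_pow_of_spectralRadius_lt_one {A : Type*} [NormedRing A] [NormedAlgebra ℂ A]
    [CompleteSpace A] {a : A} (ha : spectralRadius ℂ a < 1) : Summable fun n : ℕ ↦ ‖a ^ n‖ := by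
  obtain ⟨ρ, hρ, hρ1⟩ := ENNReal.lt_iff_exists_nnreal_btwn.1 ha
  have hroot : ∀ᶠ n : ℕ in atTop, (‖a ^ n‖₊ : ℝ≥0∞) ^ (1 / n : ℝ) < ρ :=
    (spectrum.pow_nnnorm_pow_one_div_tendsto_nhds_spectralRadius a).eventually_lt_const hρ
  refine .of_norm_bounded_eventually_nat (g := fun n ↦ (ρ : ℝ) ^ n)
    (summable_geometric_of_lt_one ρ.2 (mod_cast hρ1)) ?_
  filter_upwards [hroot, eventually_gt_atTop 0] with n hn hn0
  have hn0 : (0 : ℝ) < n := mod_cast hn0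
  rw [one_div, ENNReal.rpow_inv_lt_iff hn0, ENNReal.rpow_natCast] at hn
  rw [norm_norm]
  exact_mod_cast hn.le

variable {𝕜 E : Type*} [NontriviallyNormedField 𝕜] [NormedAddCommGroup E] [NormedSpace 𝕜 E]

theorem spectralRadius_lt_one_of_norm_pow_lt_one [CompleteSpace E] {T : E →L[𝕜] E} {n : ℕ}
    (hn : n ≠ 0) (hT : ‖T ^ n‖ < 1) : spectralRadius 𝕜 T < 1 := by
  cases subsingleton_or_nontrivial E
  · simp
  · have hpow : spectralRadius 𝕜 T ^ n < 1 :=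
      calc spectralRadius 𝕜 T ^ n
          ≤ spectralRadius 𝕜 (T ^ n) := spectrum.spectralRadius_pow_le T n hn
        _ ≤ ‖T ^ n‖₊ := spectrum.spectralRadius_le_nnnorm _
        _ < 1 := mod_cast hT
    exact lt_of_not_ge fun h ↦ hpow.not_ge (one_le_pow₀ h)

theorem antitone_norm_pow_apply {T : E →L[𝕜] E} (hT : ‖T‖ ≤ 1) (x : E) :
    Antitone fun n : ℕ ↦ ‖(T ^ n) x‖ :=
  antitone_nat_of_succ_le fun n ↦ by
    rw [pow_succ']
    exact T.le_of_opNorm_le hT _ |>.trans_eq (one_mul _)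

/- Each of the `n` terms of the sum is at least `‖T ^ n x‖ ^ 2`, so `‖T ^ n‖ ^ 2 ≤ C / n`. -/
theorem exists_norm_pow_lt_one_of_sum_sq_le {T : E →L[𝕜] E} (hT : ‖T‖ ≤ 1) {C : ℝ}
    (hsum : ∀ x n, ∑ a ∈ Finset.range n, ‖(T ^ a) x‖ ^ 2 ≤ C * ‖x‖ ^ 2) :
    ∃ n ≠ 0, ‖T ^ n‖ < 1 := by
  obtain ⟨n, hn⟩ := exists_nat_gt (max 0 (4 * C))
  obtain ⟨hn0, hCn⟩ := max_lt_iff.1 hn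
  refine ⟨n, by rintro rfl; simp at hn0, ?_⟩
  suffices ‖T ^ n‖ ≤ 1 / 2 by linarith
  refine ContinuousLinearMap.opNorm_le_bound _ (by norm_num) fun x ↦ ?_
  have hdecay : n * ‖(T ^ n) x‖ ^ 2 ≤ C * ‖x‖ ^ 2 :=
    calc n * ‖(T ^ n) x‖ ^ 2 = ∑ _a ∈ Finset.range n, ‖(T ^ n) x‖ ^ 2 := by simp
      _ ≤ ∑ a ∈ Finset.range n, ‖(T ^ a) x‖ ^ 2 := by
        gcongr with a ha
        exact antitone_norm_pow_apply hT x (Finset.mem_range.1 ha).le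
      _ ≤ C * ‖x‖ ^ 2 := hsum x n
  have hscaled : n * ‖(T ^ n) x‖ ^ 2 ≤ n * (1 / 2 * ‖x‖) ^ 2 := by
    nlinarith [sq_nonneg ‖x‖]
  exact le_of_sq_le_sq (le_of_mul_le_mul_left hscaled hn0) (by positivity)

end SpectralRadius

section ListProducts

theorem prod_ofFn_eq_of_forall_ne {M : Type*} [Monoid M] {n : ℕ} {f : Fin n → M} (i : Fin n)
    (hf : ∀ j ≠ i, f j = 1) : (List.ofFn f).prod = f i := by
  rw [List.ofFn_eq_map, List.prod_map_eq_pow_single i f fun j hj _ ↦ hf j hj,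
    List.count_eq_one_of_mem (List.nodup_finRange n) (List.mem_finRange i), pow_one]

theorem continuous_list_prod_ofFn {M X : Type*} [TopologicalSpace X] [Monoid M]
    [TopologicalSpace M] [ContinuousMul M] {n : ℕ} {f : X → Fin n → M}
    (hf : ∀ i, Continuous fun x ↦ f x i) : Continuous fun x ↦ (List.ofFn (f x)).prod := by
  simpa only [List.ofFn_eq_map] using
    continuous_list_prod (f := fun i x ↦ f x i) (List.finRange n) fun i _ ↦ hf i

theorem norm_list_prod_ofFn_le {𝕜 E : Type*} [NontriviallyNormedField 𝕜] [SeminormedAddCommGroup E]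
    [NormedSpace 𝕜 E] {n : ℕ} (f : Fin n → E →L[𝕜] E) : ‖(List.ofFn f).prod‖ ≤ ∏ i, ‖f i‖ := by
  induction n with
  | zero => simpa [one_def] using norm_id_le (𝕜 := 𝕜) (E := E)
  | succ n ih =>
    rw [List.ofFn_succ, List.prod_cons, Fin.prod_univ_succ]
    exact (norm_mul_le _ _).trans (by gcongr; exact ih _)

end ListProducts

section ToeplitzSums

theorem sum_comp_le_tsum {ι κ : Type*} {w : κ → ℝ} (hw : ∀ n, 0 ≤ w n) (hs : Summable w)
    {s : Finset ι} {f : ι → κ} (hf : Set.InjOn f s) : ∑ i ∈ s, w (f i) ≤ ∑' n, w n := by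
  classical
  rw [← Finset.sum_image hf]
  exact hs.sum_le_tsum _ fun n _ ↦ hw n

theorem sum_dist_le_two_mul_tsum {w : ℕ → ℝ} (hw : ∀ n, 0 ≤ w n) (hs : Summable w) (a : ℕ)
    (s : Finset ℕ) : ∑ b ∈ s, w (a.dist b) ≤ 2 * ∑' n, w n := by
  have hbelow : Set.InjOn a.dist (s.filter (· ≤ a)) := fun b hb c hc hbc ↦ by
    have hb := (Finset.mem_filter.1 hb).2
    have hc := (Finset.mem_filter.1 hc).2
    unfold Nat.dist at hbc
    omega
  have habove : Set.InjOn a.dist (s.filter (¬ · ≤ a)) := fun b hb c hc hbc ↦ by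
    have hb := (Finset.mem_filter.1 hb).2
    have hc := (Finset.mem_filter.1 hc).2
    unfold Nat.dist at hbc
    omega
  rw [← Finset.sum_filter_add_sum_filter_not s (· ≤ a), two_mul]
  exact add_le_add (sum_comp_le_tsum hw hs hbelow) (sum_comp_le_tsum hw hs habove)

theorem sum_prod_dist_le {ι : Type*} [Fintype ι] {w : ι → ℕ → ℝ} (hw : ∀ i n, 0 ≤ w i n)
    (hs : ∀ i, Summable (w i)) (α : ι → ℕ) (s : Finset (ι → ℕ)) :
    ∑ β ∈ s, ∏ i, w i ((α i).dist (β i)) ≤ ∏ i, (2 * ∑' n, w i n) := by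
  classical
  let box := Fintype.piFinset fun i ↦ s.image (· i)
  have hbox : s ⊆ box := fun β hβ ↦
    Fintype.mem_piFinset.2 fun i ↦ Finset.mem_image_of_mem (· i) hβ
  calc ∑ β ∈ s, ∏ i, w i ((α i).dist (β i))
      ≤ ∑ β ∈ box, ∏ i, w i ((α i).dist (β i)) :=
        Finset.sum_le_sum_of_subset_of_nonneg hbox
          fun _ _ _ ↦ Finset.prod_nonneg fun i _ ↦ hw i _
    _ = ∏ i, ∑ b ∈ s.image (· i), w i ((α i).dist b) :=
        (Finset.prod_univ_sum _ fun i b ↦ w i ((α i).dist b)).symm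
    _ ≤ ∏ i, (2 * ∑' n, w i n) :=
        Finset.prod_le_prod (fun i _ ↦ Finset.sum_nonneg fun b _ ↦ hw i _)
          fun i _ ↦ sum_dist_le_two_mul_tsum (hw i) (hs i) _ _

end ToeplitzSums

section SchurTest

variable {𝕜 ι κ : Type*} [NontriviallyNormedField 𝕜] [DecidableEq ι] {E : ι → Type*} {F : κ → Type*}
  [∀ j, NormedAddCommGroup (E j)] [∀ j, NormedSpace 𝕜 (E j)]
  [∀ i, NormedAddCommGroup (F i)] [∀ i, NormedSpace 𝕜 (F i)]
  {p q : ℝ≥0∞} [Fact (1 ≤ p)] [Fact (1 ≤ q)]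

/-- The `(i, j)` entry of an operator between `ℓᵖ` direct sums, seen as an operator matrix. -/
def lpEntry (P : lp E p →L[𝕜] lp F q) (i : κ) (j : ι) : E j →L[𝕜] F i :=
  lp.evalCLM 𝕜 F q i ∘L P ∘L lp.singleContinuousLinearMap 𝕜 E p j

theorem lpEntry_apply (P : lp E p →L[𝕜] lp F q) (i : κ) (j : ι) (x : E j) :
    lpEntry P i j x = P (lp.single p j x) i := rfl

theorem continuous_lpEntry (i : κ) (j : ι) :
    Continuous fun P : lp E p →L[𝕜] lp F q ↦ lpEntry P i j := by
  unfold lpEntry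
  fun_prop

theorem lpEntry_ext (hp : p ≠ ⊤) {P Q : lp E p →L[𝕜] lp F q}
    (h : ∀ i j, lpEntry P i j = lpEntry Q i j) : P = Q :=
  lp.ext_continuousLinearMap hp fun j ↦ ContinuousLinearMap.ext fun x ↦ lp.ext <| funext fun i ↦
    DFunLike.congr_fun (h i j) x

theorem sq_norm_apply_le_of_norm_lpEntry_le {P : lp E 2 →L[𝕜] lp F q} {c : κ → ι → ℝ} {M : ℝ}
    (hc : ∀ i j, ‖lpEntry P i j‖ ≤ c i j) (hrow : ∀ i (s : Finset ι), ∑ j ∈ s, c i j ≤ M)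
    (f : lp E 2) (s : Finset ι) (i : κ) :
    ‖P (∑ j ∈ s, lp.single 2 j (f j)) i‖ ^ 2 ≤ M * ∑ j ∈ s, c i j * ‖f j‖ ^ 2 := by
  have hc0 : ∀ i j, 0 ≤ c i j := fun i j ↦ (norm_nonneg _).trans (hc i j)
  have hentries : ‖P (∑ j ∈ s, lp.single 2 j (f j)) i‖ ≤ ∑ j ∈ s, c i j * ‖f j‖ := by
    rw [map_sum, lp.coeFn_sum, Finset.sum_apply]
    exact norm_sum_le_of_le s fun j _ ↦ (lpEntry P i j).le_of_opNorm_le (hc i j) (f j)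
  calc ‖P (∑ j ∈ s, lp.single 2 j (f j)) i‖ ^ 2
      ≤ (∑ j ∈ s, c i j * ‖f j‖) ^ 2 := by gcongr
    _ ≤ (∑ j ∈ s, c i j) * ∑ j ∈ s, c i j * ‖f j‖ ^ 2 :=
        Finset.sum_sq_le_sum_mul_sum_of_sq_le_mul s (fun j _ ↦ hc0 i j)
          (fun j _ ↦ mul_nonneg (hc0 i j) (sq_nonneg _)) fun j _ ↦ le_of_eq (by ring)
    _ ≤ M * ∑ j ∈ s, c i j * ‖f j‖ ^ 2 := by
        gcongr
        · exact Finset.sum_nonneg fun j _ ↦ mul_nonneg (hc0 i j) (sq_nonneg _)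
        · exact hrow i s

theorem norm_le_sqrt_mul_of_norm_lpEntry_le {P : lp E 2 →L[𝕜] lp F 2} {c : κ → ι → ℝ} {M N : ℝ}
    (hM : 0 ≤ M) (hN : 0 ≤ N) (hc : ∀ i j, ‖lpEntry P i j‖ ≤ c i j)
    (hrow : ∀ i (s : Finset ι), ∑ j ∈ s, c i j ≤ M)
    (hcol : ∀ j (t : Finset κ), ∑ i ∈ t, c i j ≤ N) : ‖P‖ ≤ √(M * N) := by
  refine P.opNorm_le_bound (Real.sqrt_nonneg _) fun f ↦ ?_
  have hfinite (s : Finset ι) : ‖P (∑ j ∈ s, lp.single 2 j (f j))‖ ≤ √(M * N) * ‖f‖ := by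
    refine lp.norm_le_of_forall_sum_le (by simp) (by positivity) fun t ↦ ?_
    simp only [ENNReal.toReal_ofNat, Real.rpow_ofNat]
    calc ∑ i ∈ t, ‖P (∑ j ∈ s, lp.single 2 j (f j)) i‖ ^ 2
        ≤ ∑ i ∈ t, M * ∑ j ∈ s, c i j * ‖f j‖ ^ 2 := by
          gcongr with i
          exact sq_norm_apply_le_of_norm_lpEntry_le hc hrow f s i
      _ = M * ∑ j ∈ s, (∑ i ∈ t, c i j) * ‖f j‖ ^ 2 := by
          simp only [← Finset.mul_sum, Finset.sum_mul, Finset.sum_comm (s := t)]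
      _ ≤ M * ∑ j ∈ s, N * ‖f j‖ ^ 2 := by
          gcongr with j
          exact hcol j t
      _ = M * N * ∑ j ∈ s, ‖f j‖ ^ 2 := by rw [← Finset.mul_sum, mul_assoc]
      _ ≤ M * N * ‖f‖ ^ 2 := by
          gcongr
          simpa using lp.sum_rpow_le_norm_rpow (p := 2) (by simp) f s
      _ = (√(M * N) * ‖f‖) ^ 2 := by rw [mul_pow, Real.sq_sqrt (by positivity)]
  have hf : Tendsto (fun s : Finset ι ↦ ∑ j ∈ s, lp.single 2 j (f j)) atTop (𝓝 f) :=
    lp.hasSum_single (by simp) f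
  exact le_of_tendsto ((P.continuous.tendsto f).comp hf).norm (.of_forall hfinite)

end SchurTest

section DefectMap

variable {A : Type*} [CStarAlgebra A]

/-- The map `id - Φ_X`, where `Φ_X(Y) = X Y X*`. Composites of these maps are written as products
in the algebra of continuous linear maps. -/
def defectMap (X : A) : A →L[ℝ] A :=
  1 - ContinuousLinearMap.mulLeftRight ℝ A X (star X)

theorem defectMap_apply (X Y : A) : defectMap X Y = Y - X * Y * star X := rfl

theorem continuous_defectMap : Continuous (defectMap : A → A →L[ℝ] A) := by
  unfold defectMap
  fun_prop

theorem defectMap_smul (t : ℝ) (X : A) :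
    defectMap (t • X) = t ^ 2 • defectMap X + (1 - t ^ 2) • 1 := by
  ext Y
  simp only [defectMap_apply, add_apply, smul_apply, one_apply_eq_self, star_smul, star_trivial,
    smul_mul_assoc, mul_smul_comm, smul_smul]
  module

theorem commute_defectMap {X Y : A} (h : Commute X Y) :
    Commute (defectMap X) (defectMap Y) := by
  have hconj : Commute (mulLeftRight ℝ A X (star X)) (mulLeftRight ℝ A Y (star Y)) := by
    ext Z
    calc X * (Y * Z * star Y) * star X = X * Y * Z * star (X * Y) := by
          simp only [star_mul, mul_assoc]
      _ = Y * X * Z * star (Y * X) := by rw [h.eq]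
      _ = Y * (X * Z * star X) * star Y := by simp only [star_mul, mul_assoc]
  exact ((Commute.one_left _).sub_left ((Commute.one_right _).sub_right hconj))

variable [PartialOrder A] [StarOrderedRing A]

/- Iterating `X Y X* ≤ Y` gives `Xⁿ Y (Xⁿ)* ≤ Y`, and the left side tends to `0`. -/
theorem nonneg_of_defectMap_nonneg {X Y : A} (hX : ‖X‖ < 1) (h : 0 ≤ defectMap X Y) : 0 ≤ Y := by
  have hiterate (n : ℕ) : X ^ n * Y * star (X ^ n) ≤ Y := by
    induction n with
    | zero => simp
    | succ n ih =>
      calc X ^ (n + 1) * Y * star (X ^ (n + 1)) = X * (X ^ n * Y * star (X ^ n)) * star X := by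
            simp only [pow_succ', star_mul, mul_assoc]
        _ ≤ X * Y * star X := star_right_conjugate_le_conjugate ih X
        _ ≤ Y := sub_nonneg.1 h
  have hpow : Tendsto (fun n : ℕ ↦ X ^ n) atTop (𝓝 0) :=
    tendsto_pow_atTop_nhds_zero_of_norm_lt_one hX
  have hlim : Tendsto (fun n : ℕ ↦ X ^ n * Y * star (X ^ n)) atTop (𝓝 0) := by
    simpa using (hpow.mul_const Y).mul hpow.star
  exact le_of_tendsto hlim (.of_forall hiterate)

theorem nonneg_of_prod_defectMap_nonneg {L : List A} (hL : ∀ X ∈ L, ‖X‖ < 1) {Q : A}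
    (h : 0 ≤ (L.map defectMap).prod Q) : 0 ≤ Q := by
  induction L with
  | nil => exact h
  | cons X L ih =>
    rw [List.forall_mem_cons] at hL
    exact ih hL.2 (nonneg_of_defectMap_nonneg hL.1 h)

/- By `defectMap_smul` the product on the right expands into a combination, with nonnegative
coefficients, of partial products of the maps `defectMap X`, all nonnegative at `Q`; the empty
product contributes the left side. -/
theorem smul_le_prod_defectMap_smul {t : ℝ} (ht : t ^ 2 ≤ 1) {L : List A}
    (hL : ∀ X ∈ L, ‖X‖ < 1) (hcomm : L.Pairwise Commute) {Q : A}
    (hQ : 0 ≤ (L.map defectMap).prod Q) :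
    (1 - t ^ 2) ^ L.length • Q ≤ (L.map fun X ↦ defectMap (t • X)).prod Q := by
  have ht' : 0 ≤ 1 - t ^ 2 := sub_nonneg.2 ht
  induction L generalizing Q with
  | nil => simp
  | cons X L ih =>
    obtain ⟨hX, hL⟩ := List.forall_mem_cons.1 hL
    obtain ⟨hXL, hcomm⟩ := List.pairwise_cons.1 hcomm
    have hswap : Commute (defectMap X) (L.map defectMap).prod :=
      .list_prod_right _ _ <| List.forall_mem_map.2 fun Y hY ↦ commute_defectMap (hXL Y hY)
    have hswap_smul : Commute (defectMap X) (L.map fun X ↦ defectMap (t • X)).prod :=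
      .list_prod_right _ _ <| List.forall_mem_map.2 fun Y hY ↦
        commute_defectMap ((hXL Y hY).smul_right t)
    have hLQ : 0 ≤ (L.map defectMap).prod Q := nonneg_of_defectMap_nonneg hX hQ
    have hLXQ : 0 ≤ (L.map defectMap).prod (defectMap X Q) := by
      have hXLQ : 0 ≤ (defectMap X * (L.map defectMap).prod) Q := hQ
      rwa [hswap.eq] at hXLQ
    have hXtLQ : 0 ≤ (defectMap X * (L.map fun X ↦ defectMap (t • X)).prod) Q := by
      rw [hswap_smul.eq]
      exact (smul_nonneg (pow_nonneg ht' _) (nonneg_of_prod_defectMap_nonneg hL hLXQ)).trans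
        (ih hL hcomm hLXQ)
    calc (1 - t ^ 2) ^ (X :: L).length • Q
        = (1 - t ^ 2) • (1 - t ^ 2) ^ L.length • Q := by rw [List.length_cons, pow_succ', mul_smul]
      _ ≤ (1 - t ^ 2) • (L.map fun X ↦ defectMap (t • X)).prod Q :=
          smul_le_smul_of_nonneg_left (ih hL hcomm hLQ) ht'
      _ ≤ t ^ 2 • (defectMap X * (L.map fun X ↦ defectMap (t • X)).prod) Q +
            (1 - t ^ 2) • (L.map fun X ↦ defectMap (t • X)).prod Q :=
          le_add_of_nonneg_left (smul_nonneg (sq_nonneg t) hXtLQ)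
      _ = ((X :: L).map fun X ↦ defectMap (t • X)).prod Q := by
          rw [List.map_cons, List.prod_cons, defectMap_smul]
          rfl

theorem isUnit_prod_defectMap_smul {t : ℝ} (ht : t ^ 2 < 1) {L : List A}
    (hL : ∀ X ∈ L, ‖X‖ < 1) (hcomm : L.Pairwise Commute) (h : 0 ≤ (L.map defectMap).prod 1) :
    IsUnit ((L.map fun X ↦ defectMap (t • X)).prod 1) := by
  have hpos : 0 < (1 - t ^ 2) ^ L.length := pow_pos (sub_pos.2 ht) _
  exact CStarAlgebra.isUnit_of_le _ (smul_le_prod_defectMap_smul ht.le hL hcomm h)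
    (isStrictlyPositive_one.smul hpos)

end DefectMap

section Polydisk

theorem defect_eq_prod (X : Fin k → (H →L[ℂ] H)) :
    defect X = ((List.ofFn X).map defectMap).prod 1 := by
  have hfoldr (L : List (H →L[ℂ] H)) (Q : H →L[ℂ] H) :
      ((L.map fun X Y ↦ Y - X * Y * adjoint X).foldr (· ∘ ·) id) Q = (L.map defectMap).prod Q := by
    induction L with
    | nil => rfl
    | cons X L ih => exact congrArg (defectMap X) ih
  rw [← hfoldr, List.map_ofFn]
  rfl

theorem continuous_defect : Continuous (defect : (Fin k → (H →L[ℂ] H)) → (H →L[ℂ] H)) := by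
  have hprod : Continuous fun X : Fin k → (H →L[ℂ] H) ↦ (List.ofFn fun i ↦ defectMap (X i)).prod :=
    continuous_list_prod_ofFn fun i ↦ continuous_defectMap.comp (continuous_apply i)
  refine (hprod.clm_apply (continuous_const (y := 1))).congr fun X ↦ ?_
  rw [defect_eq_prod, List.map_ofFn]
  rfl

theorem isUnit_defect_smul {X : Fin k → (H →L[ℂ] H)} (hcomm : ∀ i j, Commute (X i) (X j))
    (hX : ∀ i, ‖X i‖ < 1) (hdef : (defect X).IsPositive) {t : ℝ} (ht : t ^ 2 < 1) :
    IsUnit (defect fun i ↦ t • X i) := by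
  rw [← nonneg_iff_isPositive, defect_eq_prod] at hdef
  have hunit := isUnit_prod_defectMap_smul ht (List.forall_mem_ofFn_iff.2 hX)
    (List.pairwise_ofFn.2 fun i j _ ↦ hcomm i j) hdef
  rwa [defect_eq_prod, List.map_ofFn] at *

theorem norm_smul_lt_one {E : Type*} [SeminormedAddCommGroup E] [NormedSpace ℂ E] {x : E}
    (hx : ‖x‖ ≤ 1) {r : ℝ} (hr : r ∈ Set.Ioo (0 : ℝ) 1) : ‖(r : ℂ) • x‖ < 1 := by
  rw [norm_smul, Complex.norm_of_nonneg hr.1.le]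
  exact mul_lt_one_of_nonneg_of_lt_one_left hr.1.le hr.2 hx

/- Invertibility of the defect of `rX` comes for free: `rX = (r / s)(sX)` with `r < s < 1`. -/
theorem memClosedPolydisk_iff {X : Fin k → (H →L[ℂ] H)} :
    memClosedPolydisk X ↔ (∀ i j, Commute (X i) (X j)) ∧ (∀ i, ‖X i‖ ≤ 1) ∧
      ∀ r ∈ Set.Ioo (0 : ℝ) 1, (defect fun i ↦ (r : ℂ) • X i).IsPositive := by
  refine ⟨fun h ↦ ⟨h.1, h.2.1, fun r hr ↦ (h.2.2 r hr).2.2.1⟩, fun ⟨hcomm, hX, hdef⟩ ↦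
    ⟨hcomm, hX, fun r hr ↦ ?_⟩⟩
  have hcomm_smul (s : ℝ) (i j : Fin k) : Commute ((s : ℂ) • X i) ((s : ℂ) • X j) :=
    ((hcomm i j).smul_left _).smul_right _
  refine ⟨hcomm_smul r, fun i ↦ norm_smul_lt_one (hX i) hr, hdef r hr, ?_⟩
  obtain ⟨s, hrs, hs1⟩ := exists_between hr.2
  have hs0 : 0 < s := hr.1.trans hrs
  have hratio : (r / s) ^ 2 < 1 :=
    pow_lt_one₀ (div_nonneg hr.1.le hs0.le) ((div_lt_one hs0).2 hrs) two_ne_zero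
  have hscale : (fun i ↦ (r : ℂ) • X i) = fun i ↦ (r / s) • (s : ℂ) • X i := by
    simp only [Complex.coe_smul, smul_smul, div_mul_cancel₀ _ hs0.ne']
  rw [hscale]
  exact isUnit_defect_smul (hcomm_smul s) (fun i ↦ norm_smul_lt_one (hX i) ⟨hs0, hs1⟩)
    (hdef s ⟨hs0, hs1⟩) hratio

theorem isClosed_setOf_memClosedPolydisk :
    IsClosed {X : Fin k → (H →L[ℂ] H) | memClosedPolydisk X} := by
  simp only [memClosedPolydisk_iff, ← nonneg_iff_isPositive, commute_iff_eq, Set.ofPred_and,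
    Set.ofPred_forall]
  refine .inter (isClosed_iInter fun i ↦ isClosed_iInter fun j ↦ ?_)
    (.inter (isClosed_iInter fun i ↦ ?_) (isClosed_iInter fun r ↦ isClosed_iInter fun _ ↦ ?_))
  · exact isClosed_eq (by fun_prop) (by fun_prop)
  · exact isClosed_le (by fun_prop) (by fun_prop)
  · exact isClosed_Ici.preimage (continuous_defect.comp (by fun_prop))

end Polydisk

section PoissonKernel

/-- The operator `(∏ Xᵢ^{(βᵢ - αᵢ)⁺}) (∏ (Xᵢ*)^{(αᵢ - βᵢ)⁺})`, which up to the factor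
`r^{∑ |αᵢ - βᵢ|}` is the `(α, β)` entry of the Poisson kernel `𝒫(R, rX)`. -/
def poissonCoeff (X : Fin k → (H →L[ℂ] H)) (α β : Fin k → ℕ) : H →L[ℂ] H :=
  (List.ofFn fun i ↦ X i ^ (β i - α i)).prod *
    (List.ofFn fun i ↦ (adjoint (X i)) ^ (α i - β i)).prod

@[fun_prop]
theorem continuous_poissonCoeff (α β : Fin k → ℕ) :
    Continuous fun X : Fin k → (H →L[ℂ] H) ↦ poissonCoeff X α β := by
  unfold poissonCoeff
  simp only [← star_eq_adjoint]
  exact (continuous_list_prod_ofFn fun i ↦ by fun_prop).mul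
    (continuous_list_prod_ofFn fun i ↦ by fun_prop)

theorem norm_poissonCoeff_le (X : Fin k → (H →L[ℂ] H)) (α β : Fin k → ℕ) :
    ‖poissonCoeff X α β‖ ≤ ∏ i, ‖X i ^ (α i).dist (β i)‖ := by
  have hfactor (i : Fin k) : ‖X i ^ (β i - α i)‖ * ‖adjoint (X i) ^ (α i - β i)‖ ≤
      ‖X i ^ (α i).dist (β i)‖ := by
    rw [← star_eq_adjoint, ← star_pow, norm_star]
    rcases le_total (α i) (β i) with h | h
    · rw [Nat.dist_eq_sub_of_le h, Nat.sub_eq_zero_of_le h, pow_zero]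
      exact mul_le_of_le_one_right (norm_nonneg _) norm_id_le
    · rw [Nat.dist_eq_sub_of_le_right h, Nat.sub_eq_zero_of_le h, pow_zero]
      exact mul_le_of_le_one_left (norm_nonneg _) norm_id_le
  calc ‖poissonCoeff X α β‖
      ≤ (∏ i, ‖X i ^ (β i - α i)‖) * ∏ i, ‖adjoint (X i) ^ (α i - β i)‖ := by
        refine (norm_mul_le _ _).trans ?_
        gcongr <;> exact norm_list_prod_ofFn_le _
    _ = ∏ i, ‖X i ^ (β i - α i)‖ * ‖adjoint (X i) ^ (α i - β i)‖ := Finset.prod_mul_distrib.symm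
    _ ≤ ∏ i, ‖X i ^ (α i).dist (β i)‖ :=
        Finset.prod_le_prod (fun i _ ↦ by positivity) fun i _ ↦ hfactor i

theorem poissonCoeff_zero_single (X : Fin k → (H →L[ℂ] H)) (i : Fin k) :
    poissonCoeff X 0 (Pi.single i 1) = X i := by
  rw [poissonCoeff, prod_ofFn_eq_of_forall_ne i fun j hj ↦ by simp [hj]]
  simp

theorem poissonCoeff_single_zero (X : Fin k → (H →L[ℂ] H)) (i : Fin k) (a : ℕ) :
    poissonCoeff X (Pi.single i a) 0 = adjoint (X i) ^ a := by
  rw [poissonCoeff, prod_ofFn_eq_of_forall_ne (f := fun j ↦ adjoint (X j) ^ _) i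
    fun j hj ↦ by simp [hj]]
  simp

theorem isPoissonKernel_iff {X : Fin k → (H →L[ℂ] H)} {r : ℝ} {P : L2 k H →L[ℂ] L2 k H} :
    IsPoissonKernel X r P ↔
      ∀ α β, lpEntry P α β = (r ^ ∑ i, (α i).dist (β i)) • poissonCoeff X α β := by
  refine forall₂_congr fun α β ↦ ?_
  have hright (x y : H) : ((r ^ ∑ i, (α i).dist (β i) : ℝ) : ℂ) * inner ℂ (poissonCoeff X α β x) y =
      inner ℂ (((r ^ ∑ i, (α i).dist (β i)) • poissonCoeff X α β) x) y := by
    rw [smul_apply, inner_smul_left_eq_smul, Complex.real_smul]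
  refine ⟨fun h ↦ ContinuousLinearMap.ext fun x ↦ ext_inner_right ℂ fun y ↦ ?_, fun h x y ↦ ?_⟩
  · rw [← hright, lpEntry_apply, ← lp.inner_single_right]
    exact h x y
  · rw [lp.inner_single_right, ← lpEntry_apply, h]
    exact (hright x y).symm

namespace IsPoissonKernel

variable {X : Fin k → (H →L[ℂ] H)} {r : ℝ} {P : L2 k H →L[ℂ] L2 k H}

theorem kernel_unique {Q : L2 k H →L[ℂ] L2 k H} (hP : IsPoissonKernel X r P)
    (hQ : IsPoissonKernel X r Q) : P = Q :=
  lpEntry_ext (by simp) fun α β ↦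
    (isPoissonKernel_iff.1 hP α β).trans (isPoissonKernel_iff.1 hQ α β).symm

theorem eq_smul_lpEntry (hP : IsPoissonKernel X r P) (hr : r ≠ 0) (i : Fin k) :
    X i = r⁻¹ • lpEntry P 0 (Pi.single i 1) := by
  have hdist : ∑ j, Nat.dist ((0 : Fin k → ℕ) j) (Pi.single (M := fun _ ↦ ℕ) i 1 j) = 1 := by
    simp [Nat.dist]
  rw [isPoissonKernel_iff.1 hP, poissonCoeff_zero_single, hdist, pow_one, inv_smul_smul₀ hr]

theorem point_unique {Y : Fin k → (H →L[ℂ] H)} (hX : IsPoissonKernel X r P) (hr : r ≠ 0)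
    (hY : IsPoissonKernel Y r P) : X = Y :=
  funext fun i ↦ (hX.eq_smul_lpEntry hr i).trans (hY.eq_smul_lpEntry hr i).symm

theorem apply_single_zero_apply_single (hP : IsPoissonKernel X r P) (i : Fin k) (a : ℕ) (x : H) :
    P (lp.single 2 0 x) (Pi.single i a) = r ^ a • (adjoint (X i) ^ a) x := by
  have hdist : ∑ j, Nat.dist (Pi.single (M := fun _ ↦ ℕ) i a j) ((0 : Fin k → ℕ) j) = a := by
    simp [Nat.dist]
  rw [← lpEntry_apply, isPoissonKernel_iff.1 hP, poissonCoeff_single_zero, hdist, smul_apply]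

theorem norm_le (hP : IsPoissonKernel X r P) (hX : ∀ i, spectralRadius ℂ (X i) < 1)
    (hr : r ∈ Set.Icc (0 : ℝ) 1) : ‖P‖ ≤ ∏ i, (2 * ∑' n : ℕ, ‖X i ^ n‖) := by
  have hM : 0 ≤ ∏ i, (2 * ∑' n : ℕ, ‖X i ^ n‖) :=
    Finset.prod_nonneg fun i _ ↦ mul_nonneg two_pos.le (tsum_nonneg fun n ↦ norm_nonneg _)
  have hentry (α β : Fin k → ℕ) : ‖lpEntry P α β‖ ≤ ∏ i, ‖X i ^ (α i).dist (β i)‖ := by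
    rw [isPoissonKernel_iff.1 hP, norm_smul, Real.norm_of_nonneg (pow_nonneg hr.1 _)]
    exact (mul_le_of_le_one_left (norm_nonneg _) (pow_le_one₀ hr.1 hr.2)).trans
      (norm_poissonCoeff_le X α β)
  have hrow (α : Fin k → ℕ) (s : Finset (Fin k → ℕ)) :
      ∑ β ∈ s, ∏ i, ‖X i ^ (α i).dist (β i)‖ ≤ ∏ i, (2 * ∑' n : ℕ, ‖X i ^ n‖) :=
    sum_prod_dist_le (w := fun i n ↦ ‖X i ^ n‖) (fun i n ↦ norm_nonneg _)
      (fun i ↦ summable_norm_pow_of_spectralRadius_lt_one (hX i)) α s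
  have hschur := norm_le_sqrt_mul_of_norm_lpEntry_le hM hM hentry hrow fun β s ↦ by
    simpa only [Nat.dist_comm] using hrow β s
  rwa [Real.sqrt_mul_self hM] at hschur

theorem sum_sq_norm_adjoint_pow_le (hP : IsPoissonKernel X r P) {M : ℝ} (hM : ‖P‖ ≤ M) (i : Fin k)
    (x : H) (n : ℕ) :
    ∑ a ∈ Finset.range n, (r ^ a * ‖(adjoint (X i) ^ a) x‖) ^ 2 ≤ M ^ 2 * ‖x‖ ^ 2 := by
  let column : L2 k H := P (lp.single 2 0 x)
  have hcolumn (a : ℕ) : column (Pi.single i a) = r ^ a • (adjoint (X i) ^ a) x :=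
    hP.apply_single_zero_apply_single i a x
  calc ∑ a ∈ Finset.range n, (r ^ a * ‖(adjoint (X i) ^ a) x‖) ^ 2
      = ∑ a ∈ Finset.range n, ‖column (Pi.single i a)‖ ^ 2 := by
        simp only [hcolumn, norm_smul, mul_pow, Real.norm_eq_abs, sq_abs]
    _ ≤ ‖column‖ ^ 2 := by
        simpa using lp.sum_rpow_le_norm_rpow (p := 2) (by simp) column
          ((Finset.range n).map ⟨Pi.single i, Pi.single_injective i⟩)
    _ ≤ (M * ‖x‖) ^ 2 := by
        gcongr
        simpa using P.le_of_opNorm_le hM (lp.single 2 0 x)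
    _ = M ^ 2 * ‖x‖ ^ 2 := mul_pow _ _ _

end IsPoissonKernel

theorem spectralRadius_lt_one_of_forall_isPoissonKernel {X : Fin k → (H →L[ℂ] H)}
    {P : ℝ → (L2 k H →L[ℂ] L2 k H)} (hX : ∀ i, ‖X i‖ ≤ 1)
    (hP : ∀ r ∈ Set.Ico (0 : ℝ) 1, IsPoissonKernel X r (P r)) {M : ℝ}
    (hM : ∀ r ∈ Set.Ico (0 : ℝ) 1, ‖P r‖ ≤ M) (i : Fin k) : spectralRadius ℂ (X i) < 1 := by
  have hsum (x : H) (n : ℕ) :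
      ∑ a ∈ Finset.range n, ‖(adjoint (X i) ^ a) x‖ ^ 2 ≤ M ^ 2 * ‖x‖ ^ 2 := by
    have hlim : Tendsto (fun r : ℝ ↦ ∑ a ∈ Finset.range n, (r ^ a * ‖(adjoint (X i) ^ a) x‖) ^ 2)
        (𝓝[<] 1) (𝓝 (∑ a ∈ Finset.range n, ‖(adjoint (X i) ^ a) x‖ ^ 2)) :=
      tendsto_nhdsWithin_of_tendsto_nhds <| Continuous.tendsto' (by fun_prop) 1 _ (by simp)
    refine le_of_tendsto hlim ?_
    filter_upwards [Ico_mem_nhdsLT zero_lt_one] with r hr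
    exact (hP r hr).sum_sq_norm_adjoint_pow_le (hM r hr) i x n
  obtain ⟨n, hn, hpow⟩ := exists_norm_pow_lt_one_of_sum_sq_le
    ((adjoint.norm_map (X i)).trans_le (hX i)) hsum
  rw [← star_eq_adjoint, ← star_pow, norm_star] at hpow
  exact spectralRadius_lt_one_of_norm_pow_lt_one hn hpow

theorem isClosed_setOf_isPoissonKernel (r : ℝ) :
    IsClosed {p : (Fin k → (H →L[ℂ] H)) × (L2 k H →L[ℂ] L2 k H) | IsPoissonKernel p.1 r p.2} := by
  simp only [isPoissonKernel_iff, Set.ofPred_forall]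
  refine isClosed_iInter fun α ↦ isClosed_iInter fun β ↦ isClosed_eq ?_ ?_
  · exact (continuous_lpEntry α β).comp continuous_snd
  · fun_prop

end PoissonKernel

section PoissonDistance

variable {PA PB : ℝ → (L2 k H →L[ℂ] L2 k H)}

theorem dPfam_le_iff {c : ℝ≥0∞} :
    dPfam PA PB ≤ c ↔ ∀ r ∈ Set.Ico (0 : ℝ) 1, edist (PA r) (PB r) ≤ c := by
  simp only [dPfam, iSup₂_le_iff, edist_eq_enorm_sub, enorm_eq_nnnorm]

theorem edist_le_dPfam {r : ℝ} (hr : r ∈ Set.Ico (0 : ℝ) 1) :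
    edist (PA r) (PB r) ≤ dPfam PA PB :=
  dPfam_le_iff.1 le_rfl r hr

theorem dPfam_comm (PA PB : ℝ → (L2 k H →L[ℂ] L2 k H)) : dPfam PA PB = dPfam PB PA := by
  simp only [dPfam, ← nndist_eq_nnnorm, nndist_comm]

theorem dPfam_triangle (PA PB PC : ℝ → (L2 k H →L[ℂ] L2 k H)) :
    dPfam PA PC ≤ dPfam PA PB + dPfam PB PC :=
  dPfam_le_iff.2 fun r hr ↦ (edist_triangle _ (PB r) _).trans <|
    add_le_add (edist_le_dPfam hr) (edist_le_dPfam hr)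

theorem dPfam_eq_zero_iff :
    dPfam PA PB = 0 ↔ ∀ r ∈ Set.Ico (0 : ℝ) 1, PA r = PB r := by
  simp only [← nonpos_iff_eq_zero, dPfam_le_iff, edist_le_zero]

theorem dPfam_ne_top {M N : ℝ} (hA : ∀ r ∈ Set.Ico (0 : ℝ) 1, ‖PA r‖ ≤ M)
    (hB : ∀ r ∈ Set.Ico (0 : ℝ) 1, ‖PB r‖ ≤ N) : dPfam PA PB ≠ ⊤ := by
  refine ne_top_of_le_ne_top (ENNReal.ofReal_ne_top (r := M + N)) (dPfam_le_iff.2 fun r hr ↦ ?_)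
  rw [edist_dist]
  exact ENNReal.ofReal_le_ofReal ((dist_le_norm_add_norm _ _).trans
    (add_le_add (hA r hr) (hB r hr)))

variable {P : ℕ → ℝ → (L2 k H →L[ℂ] L2 k H)}

theorem uniformCauchySeqOn_of_dPfam
    (h : ∀ ε : ℝ≥0∞, 0 < ε → ∃ N, ∀ m ≥ N, ∀ n ≥ N, dPfam (P m) (P n) < ε) :
    UniformCauchySeqOn P atTop (Set.Ico 0 1) := by
  refine Metric.uniformCauchySeqOn_iff.2 fun ε hε ↦ ?_
  obtain ⟨N, hN⟩ := h (.ofReal ε) (ENNReal.ofReal_pos.2 hε)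
  refine ⟨N, fun m hm n hn r hr ↦ ?_⟩
  rw [← edist_lt_ofReal]
  exact (edist_le_dPfam hr).trans_lt (hN m hm n hn)

theorem exists_dPfam_lt_of_tendstoUniformlyOn
    (h : TendstoUniformlyOn P PA atTop (Set.Ico 0 1)) {ε : ℝ≥0∞} (hε : 0 < ε) :
    ∃ N, ∀ m ≥ N, dPfam (P m) PA < ε := by
  obtain ⟨δ, hδ, hδε⟩ := exists_between hε
  obtain ⟨N, hN⟩ := eventually_atTop.1 (EMetric.tendstoUniformlyOn_iff.1 h δ hδ)
  refine ⟨N, fun m hm ↦ (dPfam_le_iff.2 fun r hr ↦ ?_).trans_lt hδε⟩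
  rw [edist_comm]
  exact (hN m hm r hr).le

end PoissonDistance

section Completeness

variable {ι : Type*} {l : Filter ι} {A : ι → Fin k → (H →L[ℂ] H)}

theorem exists_tendsto_of_isPoissonKernel {r : ℝ} (hr : r ≠ 0) {P : ι → (L2 k H →L[ℂ] L2 k H)}
    {Q : L2 k H →L[ℂ] L2 k H} (hP : ∀ m, IsPoissonKernel (A m) r (P m))
    (hPQ : Tendsto P l (𝓝 Q)) : ∃ T, Tendsto A l (𝓝 T) := by
  refine ⟨fun i ↦ r⁻¹ • lpEntry Q 0 (Pi.single i 1), tendsto_pi_nhds.2 fun i ↦ ?_⟩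
  simp only [(hP _).eq_smul_lpEntry hr i]
  exact (((continuous_lpEntry _ _).tendsto Q).comp hPQ).const_smul _

theorem memD0_of_tendsto [l.NeBot] {P : ι → ℝ → (L2 k H →L[ℂ] L2 k H)}
    {T : Fin k → (H →L[ℂ] H)} {PT : ℝ → (L2 k H →L[ℂ] L2 k H)} (hA : ∀ m, memD0 (A m))
    (hP : ∀ m, ∀ r ∈ Set.Ico (0 : ℝ) 1, IsPoissonKernel (A m) r (P m r))
    (hT : ∀ r ∈ Set.Ico (0 : ℝ) 1, IsPoissonKernel T r (PT r))
    (hAT : Tendsto A l (𝓝 T)) (hPT : TendstoUniformlyOn P PT l (Set.Ico 0 1)) :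
    memD0 T := by
  have hclosed : memClosedPolydisk T :=
    isClosed_setOf_memClosedPolydisk.mem_of_tendsto hAT (.of_forall fun m ↦ (hA m).1)
  obtain ⟨N, hN⟩ := (Metric.tendstoUniformlyOn_iff.1 hPT 1 one_pos).exists
  have hbound (r : ℝ) (hr : r ∈ Set.Ico (0 : ℝ) 1) :
      ‖PT r‖ ≤ (∏ i, (2 * ∑' n : ℕ, ‖A N i ^ n‖)) + 1 :=
    (norm_le_norm_add_norm_sub' _ _).trans <| add_le_add
      ((hP N r hr).norm_le (hA N).2 (Set.Ico_subset_Icc_self hr))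
      (dist_eq_norm (PT r) _ ▸ (hN r hr).le)
  exact ⟨hclosed, spectralRadius_lt_one_of_forall_isPoissonKernel hclosed.2.1 hT hbound⟩

theorem exists_tendstoUniformlyOn_isPoissonKernel {A : ℕ → Fin k → (H →L[ℂ] H)}
    {P : ℕ → ℝ → (L2 k H →L[ℂ] L2 k H)} (hA : ∀ m, memD0 (A m))
    (hP : ∀ m, ∀ r ∈ Set.Ico (0 : ℝ) 1, IsPoissonKernel (A m) r (P m r))
    (hcauchy : UniformCauchySeqOn P atTop (Set.Ico 0 1)) :
    ∃ T PT, memD0 T ∧ (∀ r ∈ Set.Ico (0 : ℝ) 1, IsPoissonKernel T r (PT r)) ∧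
      TendstoUniformlyOn P PT atTop (Set.Ico 0 1) := by
  have hlim : ∀ r ∈ Set.Ico (0 : ℝ) 1, ∃ Q, Tendsto (P · r) atTop (𝓝 Q) := fun r hr ↦
    cauchySeq_tendsto_of_complete (hcauchy.cauchySeq hr)
  choose! PT hPT using hlim
  have huniform : TendstoUniformlyOn P PT atTop (Set.Ico 0 1) :=
    hcauchy.tendstoUniformlyOn_of_tendsto hPT
  have hhalf : (2⁻¹ : ℝ) ∈ Set.Ico (0 : ℝ) 1 := by norm_num
  obtain ⟨T, hT⟩ := exists_tendsto_of_isPoissonKernel (inv_ne_zero two_ne_zero)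
    (fun m ↦ hP m _ hhalf) (hPT _ hhalf)
  have hkernel (r : ℝ) (hr : r ∈ Set.Ico (0 : ℝ) 1) : IsPoissonKernel T r (PT r) :=
    (isClosed_setOf_isPoissonKernel r).mem_of_tendsto (hT.prodMk_nhds (hPT r hr))
      (.of_forall fun m ↦ hP m r hr)
  exact ⟨T, PT, memD0_of_tendsto hA hP hkernel hT huniform, hkernel, huniform⟩

end Completeness

/-- `d_P` is a finite-valued metric on `D^k(H)⁻₀` and it is complete there. -/
theorem stmt_17 (hk : 1 ≤ k) :
    (∀ (A B : Fin k → (H →L[ℂ] H)) (PA PB : ℝ → (L2 k H →L[ℂ] L2 k H)),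
      memD0 A → memD0 B →
      (∀ r ∈ Set.Ico (0 : ℝ) 1, IsPoissonKernel A r (PA r)) →
      (∀ r ∈ Set.Ico (0 : ℝ) 1, IsPoissonKernel B r (PB r)) →
      dPfam PA PB ≠ ⊤ ∧ (dPfam PA PB = 0 ↔ A = B) ∧ dPfam PA PB = dPfam PB PA) ∧
    (∀ (A B C : Fin k → (H →L[ℂ] H)) (PA PB PC : ℝ → (L2 k H →L[ℂ] L2 k H)),
      memD0 A → memD0 B → memD0 C →
      (∀ r ∈ Set.Ico (0 : ℝ) 1, IsPoissonKernel A r (PA r)) →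
      (∀ r ∈ Set.Ico (0 : ℝ) 1, IsPoissonKernel B r (PB r)) →
      (∀ r ∈ Set.Ico (0 : ℝ) 1, IsPoissonKernel C r (PC r)) →
      dPfam PA PC ≤ dPfam PA PB + dPfam PB PC) ∧
    (∀ (A : ℕ → Fin k → (H →L[ℂ] H)) (P : ℕ → ℝ → (L2 k H →L[ℂ] L2 k H)),
      (∀ m, memD0 (A m)) →
      (∀ m, ∀ r ∈ Set.Ico (0 : ℝ) 1, IsPoissonKernel (A m) r (P m r)) →
      (∀ ε : ℝ≥0∞, 0 < ε → ∃ N, ∀ m ≥ N, ∀ n ≥ N, dPfam (P m) (P n) < ε) →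
      ∃ (T : Fin k → (H →L[ℂ] H)) (PT : ℝ → (L2 k H →L[ℂ] L2 k H)),
        memD0 T ∧ (∀ r ∈ Set.Ico (0 : ℝ) 1, IsPoissonKernel T r (PT r)) ∧
        ∀ ε : ℝ≥0∞, 0 < ε → ∃ N, ∀ m ≥ N, dPfam (P m) PT < ε) := by
  refine ⟨fun A B PA PB hA hB hPA hPB ↦ ⟨?_, ⟨fun h ↦ ?_, ?_⟩, dPfam_comm PA PB⟩,
    fun _ _ _ PA PB PC _ _ _ _ _ _ ↦ dPfam_triangle PA PB PC, fun A P hA hP hcauchy ↦ ?_⟩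
  · exact dPfam_ne_top (fun r hr ↦ (hPA r hr).norm_le hA.2 (Set.Ico_subset_Icc_self hr))
      (fun r hr ↦ (hPB r hr).norm_le hB.2 (Set.Ico_subset_Icc_self hr))
  · have hhalf : (2⁻¹ : ℝ) ∈ Set.Ico (0 : ℝ) 1 := by norm_num
    exact (hPA _ hhalf).point_unique (inv_ne_zero two_ne_zero)
      (dPfam_eq_zero_iff.1 h _ hhalf ▸ hPB _ hhalf)
  · rintro rfl
    exact dPfam_eq_zero_iff.2 fun r hr ↦ (hPA r hr).kernel_unique (hPB r hr)
  · obtain ⟨T, PT, hT, hPT, hlim⟩ :=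
      exists_tendstoUniformlyOn_isPoissonKernel hA hP (uniformCauchySeqOn_of_dPfam hcauchy)
    exact ⟨T, PT, hT, hPT, fun ε hε ↦ exists_dPfam_lt_of_tendstoUniformlyOn hlim hε⟩

end
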